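/- arXiv:math/0402257 — 3 statements merged into one kernel-verified Lean document; each statement's English description precedes it below -/
import Mathlib

section
/- Let n ≥ 3. Let E be a linear subspace of ℝ^{n−2}, T : E → ℝ^{n−2} a nonzero linear map with ⟨u, T u′⟩ = ⟨u′, T u⟩ for all u, u′ ∈ E, L ⊆ E an additive subgroup spanning E, and μ : L → ℝ a map satisfying μ(u + u′) = μ(u) + μ(u′) − ⟨u′, T u⟩, so that Γ = {g_{u, Tu, μ(u)} : u ∈ L} is a group of isometries. Suppose S is a nonempty subset of ℝⁿ with |X − X′|² ≥ 0 for all X, X′ ∈ S and g(S) = S for all g ∈ Γ, and let y₋ = inf and y₊ = sup of the set I of y-coordinates of points of S, with y₋ < 0 < y₊. Then: (1) y₋ and y₊ are not both infinite; (2) if y₋ and y₊ are finite and y₋ = −y₊, then ‖y₊·T u‖ ≤ ‖u‖ for every u ∈ E; (3) if y₊ = +∞, then ⟨u, T u⟩ ≥ −y₋·‖T u‖² for every u ∈ E; (4) if y₋ = −∞, then ⟨u, T u⟩ ≤ −y₊·‖T u‖² for every u ∈ E. -/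
/-!
Write `Q y y' u = ⟪u + y • T u, u + y' • T u⟫`. If `X, X' ∈ S` have last coordinates `y, y'` and
`u ∈ L`, then `|g X - X'|²`, with `g` the element of `Γ` attached to `k • u`, is a polynomial of
degree two in `k` with leading coefficient `Q y y' u` (`μ (k • u)` contributes
`-(k (k - 1) / 2) ⟪u, T u⟫`). It is nonnegative for every `k`, so `Q y y' u ≥ 0` on `L`
(`Q_nonneg_of_mem`). As `Q y y'` is homogeneous and continuous, this extends to the closure of
`ℚ L`, which contains the real span `E` of `L` (`span_subset_closure`).

So `‖u‖² + (y + y') ⟪u, T u⟫ + y y' ‖T u‖² ≥ 0` for all `u ∈ E` and `y, y' ∈ closure I`. The four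
claims follow by taking `y, y'` to be the ends of `I`, dividing by `y` or `y'` as it goes to
infinity (`nonneg_of_not_bddAbove`, `nonpos_of_not_bddBelow`).
-/


open Set
open scoped RealInnerProductSpace

noncomputable section

/-- The Lorentzian quadratic form `|(x,z,y)|² = 2xy + ‖z‖²` on `ℝ × ℝ^m × ℝ`. -/
def qform {m : ℕ} (p : ℝ × EuclideanSpace ℝ (Fin m) × ℝ) : ℝ :=
  2 * p.1 * p.2.2 + ‖p.2.1‖ ^ 2

/-- The unipotent isometry `g_{u,v,μ}(x, z, y) = (x + μ − ⟨z, v⟩ − (y/2)‖v‖², z + u + y·v, y)`. -/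
def gmap {m : ℕ} (u v : EuclideanSpace ℝ (Fin m)) (μ : ℝ)
    (p : ℝ × EuclideanSpace ℝ (Fin m) × ℝ) : ℝ × EuclideanSpace ℝ (Fin m) × ℝ :=
  (p.1 + μ - ⟪p.2.1, v⟫ - (p.2.2 / 2) * ‖v‖ ^ 2, p.2.1 + u + p.2.2 • v, p.2.2)

/-- Elements having a positive integer multiple in `L`, that is, the rational span of `L`, are dense
in the real span of `L`. -/
lemma span_subset_closure {V : Type*} [NormedAddCommGroup V] [NormedSpace ℝ V]
    (L : AddSubgroup V) {u : V} (hu : u ∈ Submodule.span ℝ (L : Set V)) :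
    u ∈ closure {x : V | ∃ N : ℕ, N ≠ 0 ∧ (N : ℝ) • x ∈ L} := by
  induction hu using Submodule.span_induction with
  | mem x hx => exact subset_closure ⟨1, one_ne_zero, by simpa using hx⟩
  | zero => exact subset_closure ⟨1, one_ne_zero, by simp [L.zero_mem]⟩
  | add x y _ _ hx hy =>
    refine map_mem_closure₂ continuous_add hx hy ?_
    rintro a ⟨N, hN, ha⟩ b ⟨M, hM, hb⟩
    refine ⟨N * M, mul_ne_zero hN hM, ?_⟩
    have h := L.add_mem (L.nsmul_mem ha M) (L.nsmul_mem hb N)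
    convert h using 1
    simp only [← Nat.cast_smul_eq_nsmul ℝ]
    push_cast
    module
  | smul r x _ hx =>
    have hr : r ∈ closure (Set.range ((↑) : ℚ → ℝ)) := Rat.denseRange_cast r
    refine map_mem_closure₂ (f := fun (r : ℝ) (x : V) => r • x) continuous_smul hr hx ?_
    rintro _ ⟨q, rfl⟩ b ⟨N, hN, hb⟩
    refine ⟨q.den * N, mul_ne_zero q.den_ne_zero hN, ?_⟩
    have h := L.zsmul_mem hb q.num
    convert h using 1
    rw [← Int.cast_smul_eq_zsmul ℝ, smul_smul, smul_smul]
    congr 1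
    have hq : (q : ℝ) * q.den = q.num := by exact_mod_cast Rat.mul_den_eq_num q
    push_cast
    rw [← hq]
    ring

lemma leading_coeff_nonneg {a b c : ℝ} (h : ∀ k : ℕ, 0 ≤ (k : ℝ) ^ 2 * a + k * b + c) :
    0 ≤ a := by
  by_contra! ha
  obtain ⟨k, hk⟩ := exists_nat_gt ((|b| + |c|) / (-a) + 1)
  have h1 : (1 : ℝ) < k := by
    have : 0 ≤ (|b| + |c|) / (-a) := div_nonneg (by positivity) (by linarith)
    linarith
  have h2 : |b| + |c| < k * (-a) := by
    rw [← div_lt_iff₀ (by linarith)]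
    linarith
  have h3 := h k
  nlinarith [le_abs_self b, le_abs_self c, abs_nonneg c, abs_nonneg b,
    mul_lt_mul_of_pos_left h2 (by linarith : (0 : ℝ) < k),
    mul_nonneg (by linarith : (0 : ℝ) ≤ k - 1) (abs_nonneg c),
    mul_nonneg (by linarith : (0 : ℝ) ≤ k) (sub_nonneg.2 (le_abs_self b))]

lemma nonneg_of_not_bddAbove {I : Set ℝ} (hI : ¬ BddAbove I) {p q : ℝ}
    (h : ∀ y ∈ I, 0 ≤ p + y * q) : 0 ≤ q := by
  by_contra! hq
  refine hI ⟨p / (-q), fun y hy => ?_⟩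
  rw [le_div_iff₀ (by linarith)]
  linarith [h y hy]

lemma nonpos_of_not_bddBelow {I : Set ℝ} (hI : ¬ BddBelow I) {p q : ℝ}
    (h : ∀ y ∈ I, 0 ≤ p + y * q) : q ≤ 0 := by
  by_contra! hq
  refine hI ⟨-p / q, fun y hy => ?_⟩
  rw [div_le_iff₀ hq]
  linarith [h y hy]

/-- Nonnegativity, for `u ∈ L`, of the leading coefficient in `k` of `|g X - X'|²`, where `g` is
the group element attached to `k • u`. -/
lemma Q_nonneg_of_mem {m : ℕ}
    (T : EuclideanSpace ℝ (Fin m) →ₗ[ℝ] EuclideanSpace ℝ (Fin m))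
    (L : AddSubgroup (EuclideanSpace ℝ (Fin m)))
    (μ : EuclideanSpace ℝ (Fin m) → ℝ)
    (hμ : ∀ u ∈ L, ∀ u' ∈ L, μ (u + u') = μ u + μ u' - ⟪u', T u⟫)
    (S : Set (ℝ × EuclideanSpace ℝ (Fin m) × ℝ))
    (hach : ∀ X ∈ S, ∀ X' ∈ S, 0 ≤ qform (X - X'))
    (hinv : ∀ u ∈ L, gmap u (T u) (μ u) '' S = S)
    {X X' : ℝ × EuclideanSpace ℝ (Fin m) × ℝ} (hX : X ∈ S) (hX' : X' ∈ S)
    {u : EuclideanSpace ℝ (Fin m)} (hu : u ∈ L) :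
    0 ≤ ‖u‖ ^ 2 + (X.2.2 + X'.2.2) * ⟪u, T u⟫ + X.2.2 * X'.2.2 * ‖T u‖ ^ 2 := by
  have hμk : ∀ k : ℕ, μ (k • u) = k * μ u - k * (k - 1) / 2 * ⟪u, T u⟫ := by
    intro k
    induction k with
    | zero =>
      have h0 := hμ 0 L.zero_mem 0 L.zero_mem
      simp only [add_zero, map_zero, inner_zero_right, sub_zero] at h0
      simp only [zero_smul, Nat.cast_zero]
      linarith
    | succ k ih =>
      rw [succ_nsmul, hμ _ (L.nsmul_mem hu k) _ hu, ih, map_nsmul,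
        ← Nat.cast_smul_eq_nsmul ℝ k (T u), inner_smul_right]
      push_cast
      ring
  obtain ⟨x, z, y⟩ := X
  obtain ⟨x', z', y'⟩ := X'
  have hw : ‖u + y • T u‖ ^ 2 = ‖u‖ ^ 2 + 2 * y * ⟪u, T u⟫ + y ^ 2 * ‖T u‖ ^ 2 := by
    rw [norm_add_sq_real, inner_smul_right, norm_smul, mul_pow, Real.norm_eq_abs, sq_abs]
    ring
  refine leading_coeff_nonneg
    (b := 2 * (μ u + ⟪u, T u⟫ / 2 - ⟪z, T u⟫) * (y - y') + 2 * ⟪z - z', u + y • T u⟫)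
    (c := 2 * (x - x') * (y - y') + ‖z - z'‖ ^ 2) fun k => ?_
  have hg : gmap (k • u) (T (k • u)) (μ (k • u)) (x, z, y) ∈ S := by
    rw [← hinv _ (L.nsmul_mem hu k)]
    exact ⟨_, hX, rfl⟩
  have h := hach _ hg _ hX'
  have hz : z + k • u + y • T (k • u) - z' = (z - z') + (k : ℝ) • (u + y • T u) := by
    rw [map_nsmul, ← Nat.cast_smul_eq_nsmul ℝ k, ← Nat.cast_smul_eq_nsmul ℝ k]
    module
  have hz2 : ‖z + k • u + y • T (k • u) - z'‖ ^ 2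
      = ‖z - z'‖ ^ 2 + 2 * k * ⟪z - z', u + y • T u⟫ + k ^ 2 * ‖u + y • T u‖ ^ 2 := by
    rw [hz, norm_add_sq_real, inner_smul_right, norm_smul, mul_pow, Real.norm_eq_abs, sq_abs]
    ring
  have hTk : T (k • u) = (k : ℝ) • T u := by rw [map_nsmul, Nat.cast_smul_eq_nsmul]
  have hi : ⟪z, T (k • u)⟫ = k * ⟪z, T u⟫ := by rw [hTk, inner_smul_right]
  have hn : ‖T (k • u)‖ ^ 2 = k ^ 2 * ‖T u‖ ^ 2 := by
    rw [hTk, norm_smul, mul_pow, Real.norm_eq_abs, sq_abs]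
  simp only [qform, gmap, Prod.fst_sub, Prod.snd_sub] at h
  rw [hz2, hi, hn, hμk, hw] at h
  refine h.trans_eq ?_
  ring

/-- bounds on the extremities `y₋ = inf I`, `y₊ = sup I` of the set `I` of
`y`-coordinates of an achronal set `S` invariant under the unipotent group
`Γ = {g_{u, Tu, μ(u)} : u ∈ L}`: (1) `y₋, y₊` are not both infinite; (2) if they are
finite with `y₋ = −y₊ = -a`, then `‖a • Tu‖ ≤ ‖u‖` on `E`; (3) if `y₊ = +∞` then
`⟨u, Tu⟩ ≥ −y₋·‖Tu‖²` on `E`; (4) if `y₋ = −∞` then `⟨u, Tu⟩ ≤ −y₊·‖Tu‖²` on `E`. -/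
theorem stmt17 (n : ℕ) (hn : 3 ≤ n)
    (E : Submodule ℝ (EuclideanSpace ℝ (Fin (n - 2))))
    (T : EuclideanSpace ℝ (Fin (n - 2)) →ₗ[ℝ] EuclideanSpace ℝ (Fin (n - 2)))
    (hTne : ∃ u ∈ E, T u ≠ 0)
    (hTsym : ∀ u ∈ E, ∀ u' ∈ E, ⟪u, T u'⟫ = ⟪u', T u⟫)
    (L : AddSubgroup (EuclideanSpace ℝ (Fin (n - 2))))
    (hLE : (L : Set (EuclideanSpace ℝ (Fin (n - 2)))) ⊆ E)
    (hLspan : Submodule.span ℝ (L : Set (EuclideanSpace ℝ (Fin (n - 2)))) = E)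
    (μ : EuclideanSpace ℝ (Fin (n - 2)) → ℝ)
    (hμ : ∀ u ∈ L, ∀ u' ∈ L, μ (u + u') = μ u + μ u' - ⟪u', T u⟫)
    (S : Set (ℝ × EuclideanSpace ℝ (Fin (n - 2)) × ℝ)) (hSne : S.Nonempty)
    (hach : ∀ X ∈ S, ∀ X' ∈ S, 0 ≤ qform (X - X'))
    (hinv : ∀ u ∈ L, gmap u (T u) (μ u) '' S = S)
    (I : Set ℝ)
    (hI : I = (fun X : ℝ × EuclideanSpace ℝ (Fin (n - 2)) × ℝ => X.2.2) '' S)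
    (hneg : ∃ y ∈ I, y < 0) (hpos : ∃ y ∈ I, 0 < y) :
    (BddBelow I ∨ BddAbove I) ∧
    (∀ a : ℝ, IsGLB I (-a) → IsLUB I a → ∀ u ∈ E, ‖a • T u‖ ≤ ‖u‖) ∧
    (¬ BddAbove I → ∀ b : ℝ, IsGLB I b → ∀ u ∈ E, -b * ‖T u‖ ^ 2 ≤ ⟪u, T u⟫) ∧
    (¬ BddBelow I → ∀ a : ℝ, IsLUB I a → ∀ u ∈ E, ⟪u, T u⟫ ≤ -a * ‖T u‖ ^ 2) := by
  have key : ∀ y ∈ closure I, ∀ y' ∈ closure I, ∀ u ∈ E,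
      0 ≤ ‖u‖ ^ 2 + (y + y') * ⟪u, T u⟫ + y * y' * ‖T u‖ ^ 2 := by
    have hT : Continuous T := T.continuous_of_finiteDimensional
    have h1 : ∀ y ∈ I, ∀ y' ∈ I, ∀ u ∈ E,
        0 ≤ ‖u‖ ^ 2 + (y + y') * ⟪u, T u⟫ + y * y' * ‖T u‖ ^ 2 := by
      intro y hy y' hy' u hu
      rw [hI] at hy hy'
      obtain ⟨X, hX, rfl⟩ := hy
      obtain ⟨X', hX', rfl⟩ := hy'
      rw [← hLspan] at hu
      refine closure_minimal (t := {u | 0 ≤ ‖u‖ ^ 2 + (X.2.2 + X'.2.2) * ⟪u, T u⟫ +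
        X.2.2 * X'.2.2 * ‖T u‖ ^ 2}) ?_ (isClosed_le continuous_const (by fun_prop))
        (span_subset_closure L hu)
      rintro v ⟨N, hN, hv⟩
      have h := Q_nonneg_of_mem T L μ hμ S hach hinv hX hX' hv
      rw [map_smul, inner_smul_left, inner_smul_right, norm_smul, norm_smul, mul_pow, mul_pow,
        Real.norm_eq_abs, sq_abs] at h
      simp only [conj_trivial] at h
      have hN2 : (0 : ℝ) < (N : ℝ) ^ 2 := by positivity
      refine nonneg_of_mul_nonneg_right (h.trans_eq ?_) hN2
      ring
    intro y hy y' hy' u hu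
    have h2 := map_mem_closure₂ (u := Set.Ici (0 : ℝ))
      (f := fun y y' : ℝ => ‖u‖ ^ 2 + (y + y') * ⟪u, T u⟫ + y * y' * ‖T u‖ ^ 2)
      (by fun_prop) hy hy' (fun a ha b hb => h1 a ha b hb u hu)
    rwa [isClosed_Ici.closure_eq] at h2
  have hIne : I.Nonempty := hpos.imp fun _ h => h.1
  refine ⟨?_, ?_, ?_, ?_⟩
  · by_contra! hb
    obtain ⟨u, hu, hTu⟩ := hTne
    have h1 : ∀ y ∈ I, ⟪u, T u⟫ + y * ‖T u‖ ^ 2 ≤ 0 := fun y hy =>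
      nonpos_of_not_bddBelow hb.1 (p := ‖u‖ ^ 2 + y * ⟪u, T u⟫) fun y' hy' => by
        linarith [key y (subset_closure hy) y' (subset_closure hy') u hu]
    have h2 : 0 ≤ -‖T u‖ ^ 2 :=
      nonneg_of_not_bddAbove hb.2 (p := -⟪u, T u⟫) fun y hy => by linarith [h1 y hy]
    have h3 : 0 < ‖T u‖ := norm_pos_iff.2 hTu
    nlinarith
  · intro a hg hl u hu
    have h := key a (hl.mem_closure hIne) (-a) (hg.mem_closure hIne) u hu
    refine (sq_le_sq₀ (norm_nonneg _) (norm_nonneg _)).1 ?_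
    rw [norm_smul, mul_pow, Real.norm_eq_abs, sq_abs]
    linarith
  · intro hb b hg u hu
    have h : 0 ≤ ⟪u, T u⟫ + b * ‖T u‖ ^ 2 :=
      nonneg_of_not_bddAbove hb (p := ‖u‖ ^ 2 + b * ⟪u, T u⟫) fun y hy => by
        linarith [key y (subset_closure hy) b (hg.mem_closure hIne) u hu]
    linarith
  · intro hb a hl u hu
    have h : ⟪u, T u⟫ + a * ‖T u‖ ^ 2 ≤ 0 :=
      nonpos_of_not_bddBelow hb (p := ‖u‖ ^ 2 + a * ⟪u, T u⟫) fun y hy => by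
        linarith [key y (subset_closure hy) a (hl.mem_closure hIne) u hu]
    linarith
end
end

section
/- Let V be a finite-dimensional real inner product space, E ⊆ V a linear subspace, and T : E → V a linear map such that ⟪u, T u′⟫ = ⟪u′, T u⟫ for all u, u′ ∈ E, and ‖T u‖ ≤ ‖u‖ for all u ∈ E. Then there exists a linear map T̂ : V → V extending T (T̂ u = T u for u ∈ E) which is symmetric (⟪x, T̂ y⟫ = ⟪y, T̂ x⟫ for all x, y ∈ V) and satisfies ‖T̂ x‖ ≤ ‖x‖ for all x ∈ V. -/
/-!
The proof constructs the smallest extension in the sense of Krein. Put `A = 1 + T : E → V`. The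
contraction hypothesis says exactly that `‖A u‖² ≤ 2 ⟪u, A u⟫` on `E`, so the compression
`G = P A : E → E` of `A` to `E`, which is symmetric, has the same kernel as `A`. Hence
`range G = (ker A)ᗮ = range A†`, and there is a linear `L : V → E` with `G ∘ L = A†`.
The extension is `S = A ∘ L - 1`:
* on `E` we have `A† u = G u`, so `L u - u ∈ ker G = ker A` and `A (L u) = A u`;
* `⟪x, A (L y)⟫ = ⟪G (L x), L y⟫` is symmetric in `x` and `y`;
* `‖A (L x)‖² ≤ 2 ⟪L x, A (L x)⟫ = 2 ⟪x, A (L x)⟫`, which says that `‖S x‖ ≤ ‖x‖`.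
-/

open scoped RealInnerProductSpace

/-- a symmetric linear contraction `T : E → V` defined on a subspace `E` of
a finite-dimensional real inner product space `V` extends to a symmetric linear
contraction `T̂ : V → V`. -/
theorem stmt18 {V : Type*} [NormedAddCommGroup V] [InnerProductSpace ℝ V]
    [FiniteDimensional ℝ V]
    (E : Submodule ℝ V) (T : E →ₗ[ℝ] V)
    (hsym : ∀ u u' : E, ⟪(u : V), T u'⟫ = ⟪(u' : V), T u⟫)
    (hcontr : ∀ u : E, ‖T u‖ ≤ ‖(u : V)‖) :
    ∃ S : V →ₗ[ℝ] V, (∀ u : E, S u = T u) ∧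
      (∀ x y : V, ⟪x, S y⟫ = ⟪y, S x⟫) ∧
      ∀ x : V, ‖S x‖ ≤ ‖x‖ := by
  obtain ⟨A, hA⟩ : ∃ A : E →ₗ[ℝ] V, ∀ u, A u = u + T u := ⟨E.subtype + T, fun u => rfl⟩
  have hAsym : ∀ u v : E, ⟪(u : V), A v⟫ = ⟪(v : V), A u⟫ := fun u v => by
    rw [hA, hA, inner_add_right, inner_add_right, hsym u v, real_inner_comm (u : V) (v : V)]
  have hAsq : ∀ u : E, ‖A u‖ ^ 2 ≤ 2 * ⟪(u : V), A u⟫ := fun u => by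
    have h := pow_le_pow_left₀ (norm_nonneg _) (hcontr u) 2
    rw [hA, norm_add_sq_real, inner_add_right, real_inner_self_eq_norm_sq]
    linarith
  obtain ⟨G, hG⟩ : ∃ G : E →ₗ[ℝ] E, ∀ u v, ⟪u, G v⟫ = ⟪(u : V), A v⟫ :=
    ⟨E.subtype.adjoint ∘ₗ A, fun u v => LinearMap.adjoint_inner_right E.subtype u (A v)⟩
  have hGker : ∀ u, G u = 0 → A u = 0 := fun u hu => by
    have h := hAsq u
    rw [← hG, hu, inner_zero_right, mul_zero] at h
    exact norm_eq_zero.1 (pow_eq_zero_iff two_ne_zero |>.1 (le_antisymm h (sq_nonneg _)))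
  have hrange : ∀ x, A.adjoint x ∈ LinearMap.range G := fun x => by
    rw [← Submodule.orthogonal_orthogonal (LinearMap.range G), Submodule.mem_orthogonal]
    intro v hv
    -- A vector orthogonal to `range G` lies in `ker G`, as `G` is symmetric.
    have hGv : G v = 0 := by
      refine ext_inner_left ℝ fun w => ?_
      rw [hG, hAsym, ← hG, inner_zero_right]
      exact (Submodule.mem_orthogonal' _ _).1 hv _ ⟨w, rfl⟩
    rw [LinearMap.adjoint_inner_right, hGker v hGv, inner_zero_left]
  obtain ⟨R, hR⟩ := G.rangeRestrict.exists_rightInverse_of_surjective G.range_rangeRestrict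
  obtain ⟨L, hL⟩ : ∃ L : V →ₗ[ℝ] E, ∀ x, G (L x) = A.adjoint x :=
    ⟨R ∘ₗ A.adjoint.codRestrict _ hrange, fun x =>
      congrArg Subtype.val (LinearMap.congr_fun hR (A.adjoint.codRestrict _ hrange x))⟩
  have hAL : ∀ x y, ⟪x, A (L y)⟫ = ⟪(L y : V), A (L x)⟫ := fun x y => by
    rw [← hG, hL, LinearMap.adjoint_inner_right, real_inner_comm]
  refine ⟨A ∘ₗ L - LinearMap.id, fun u => ?_, fun x y => ?_, fun x => ?_⟩
  · have h : A (L u - u) = 0 := by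
      refine hGker _ (ext_inner_left ℝ fun w => ?_)
      rw [map_sub, inner_sub_right, hL, hG, LinearMap.adjoint_inner_right, hAsym w u,
        real_inner_comm, sub_self, inner_zero_right]
    rw [map_sub, sub_eq_zero] at h
    simp [h, hA]
  · simp only [LinearMap.sub_apply, LinearMap.comp_apply, LinearMap.id_apply, inner_sub_right]
    rw [hAL x y, hAL y x, hAsym, real_inner_comm x y]
  · simp only [LinearMap.sub_apply, LinearMap.comp_apply, LinearMap.id_apply]
    refine pow_le_pow_iff_left₀ (norm_nonneg _) (norm_nonneg _) two_ne_zero |>.1 ?_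
    have h := hAsq (L x)
    rw [norm_sub_sq_real, real_inner_comm, hAL]
    linarith
end

section
/- Let V be a finite-dimensional real inner product space, E ⊆ V a linear subspace, c > 0, and T : E → V a linear map such that ⟪u, T u′⟫ = ⟪u′, T u⟫ for all u, u′ ∈ E, and ⟪u, T u⟫ ≥ c·‖T u‖² for all u ∈ E. Then there exists a linear map T̂ : V → V extending T (T̂ u = T u for u ∈ E) which is symmetric (⟪x, T̂ y⟫ = ⟪y, T̂ x⟫ for all x, y ∈ V) and satisfies ⟪x, T̂ x⟫ ≥ c·‖T̂ x‖² for all x ∈ V. -/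
/-!
Let `W` be the range of `T`. If `u ∈ E` and either `u ⟂ W` or `T u ⟂ E`, then `⟪u, T u⟫ = 0`, so the
lower bound `c * ‖T u‖ ^ 2 ≤ ⟪u, T u⟫` forces `T u = 0`. The second case says `W ⊓ Eᗮ = ⊥`, that is,
`E ⊔ Wᗮ = ⊤`; the first says that `T` vanishes on `E ⊓ Wᗮ`. Hence `T` extends to `V` by zero on `Wᗮ`.
For `x = u + w` and `y = u' + w'` with `u, u' ∈ E` and `w, w' ∈ Wᗮ` the extension `S` satisfies
`⟪x, S y⟫ = ⟪u, T u'⟫`, so symmetry and the lower bound are inherited from `T`. (This `S` is the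
smallest nonnegative extension, the Krein–von Neumann extension.)
-/

open scoped RealInnerProductSpace

/-- a symmetric linear map `T : E → V` on a subspace `E` of a
finite-dimensional real inner product space `V` satisfying `⟪u, Tu⟫ ≥ c‖Tu‖²` extends to
a symmetric linear map `T̂ : V → V` satisfying the same inequality on all of `V`. -/
theorem stmt19 {V : Type*} [NormedAddCommGroup V] [InnerProductSpace ℝ V]
    [FiniteDimensional ℝ V]
    (E : Submodule ℝ V) (c : ℝ) (hc : 0 < c) (T : E →ₗ[ℝ] V)
    (hsym : ∀ u u' : E, ⟪(u : V), T u'⟫ = ⟪(u' : V), T u⟫)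
    (hpos : ∀ u : E, c * ‖T u‖ ^ 2 ≤ ⟪(u : V), T u⟫) :
    ∃ S : V →ₗ[ℝ] V, (∀ u : E, S u = T u) ∧
      (∀ x y : V, ⟪x, S y⟫ = ⟪y, S x⟫) ∧
      ∀ x : V, c * ‖S x‖ ^ 2 ≤ ⟪x, S x⟫ := by
  have hzero : ∀ u : E, ⟪(u : V), T u⟫ = 0 → T u = 0 := by
    intro u hu
    have h := hpos u
    rw [hu] at h
    have h2 : ‖T u‖ ^ 2 = 0 :=
      le_antisymm (nonpos_of_mul_nonpos_right h hc) (sq_nonneg _)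
    simpa using h2
  set W := LinearMap.range T with hW
  have hperp : ∀ w ∈ Wᗮ, ∀ u : E, ⟪w, T u⟫ = 0 := fun w hw u =>
    (Submodule.mem_orthogonal' W w).1 hw (T u) ⟨u, rfl⟩
  have hsup : E ⊔ Wᗮ = ⊤ := by
    rw [← Submodule.orthogonal_eq_bot_iff, ← Submodule.inf_orthogonal,
      Submodule.orthogonal_orthogonal, Submodule.eq_bot_iff]
    rintro _ ⟨hE, u, rfl⟩
    exact hzero u ((Submodule.mem_orthogonal E _).1 hE u u.2)
  -- A linear choice of a decomposition `x = u + w` with `u ∈ E` and `w ∈ Wᗮ`.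
  obtain ⟨g, hg⟩ := (E.subtype.coprod Wᗮ.subtype).exists_rightInverse_of_surjective (by
    rw [LinearMap.range_coprod, Submodule.range_subtype, Submodule.range_subtype, hsup])
  have hdec : ∀ x : V, ((g x).1 : V) + ((g x).2 : V) = x := fun x => by
    simpa using LinearMap.congr_fun hg x
  have hinner : ∀ (x : V) (u : E), ⟪x, T u⟫ = ⟪((g x).1 : V), T u⟫ := fun x u => by
    conv_lhs => rw [← hdec x, inner_add_left, hperp _ (g x).2.2 u, add_zero]
  refine ⟨T ∘ₗ LinearMap.fst ℝ E Wᗮ ∘ₗ g, fun u => ?_, fun x y => ?_, fun x => ?_⟩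
  · -- The difference `u - (g u).1` lies in `E ⊓ Wᗮ`, where `T` vanishes.
    have h := hzero (u - (g u).1) (by
      rw [Submodule.coe_sub, inner_sub_left, hinner u, sub_self])
    rw [map_sub, sub_eq_zero] at h
    exact h.symm
  · change ⟪x, T (g y).1⟫ = ⟪y, T (g x).1⟫
    rw [hinner x, hinner y, hsym]
  · change c * ‖T (g x).1‖ ^ 2 ≤ ⟪x, T (g x).1⟫
    rw [hinner x]
    exact hpos _
end
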